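/- Suppose δ_□(W_{Q_n},W)→0 for some W∈𝒲, limsup_{n→∞}‖W_{Q_n}‖_{qΔ}<∞ for some q∈(1,∞], the tail assumption (T) holds for some p ≥ v, and 1/p+1/q ≤ 1. Fix θ∈ℝ such that T_{W,φ}(F_θ) is a singleton and Z is differentiable at θ, and let t = Z′(θ). Then the set of minimizers of D(ν|ρ) over {ν∈𝒯ℳ : D(ν|ρ)<∞, T_{W,φ}(ν)=t} equals F_θ. -/

import Mathlib

open MeasureTheory Filter Set
open scoped ENNReal NNReal

noncomputable section

/-- The uniform probability measure on `[0,1]`. -/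
def unif01 : Measure ℝ := volume.restrict (Set.Icc 0 1)

instance : IsProbabilityMeasure unif01 :=
  ⟨by rw [unif01, Measure.restrict_apply_univ, Real.volume_Icc]; norm_num⟩

/-- The `L^r` norm (`r : ℝ≥0∞`) of a kernel, viewed as a function on `[0,1]²`. -/
def kerNorm (W : ℝ → ℝ → ℝ) (r : ℝ≥0∞) : ℝ≥0∞ :=
  eLpNorm (fun z : ℝ × ℝ => W z.1 z.2) r (unif01.prod unif01)

/-- The (strong) cut distance `d_□` between two kernels on `[0,1]²`. -/
def cutDist (W₁ W₂ : ℝ → ℝ → ℝ) : ℝ :=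
  ⨆ S : {S : Set ℝ // MeasurableSet S}, ⨆ T : {T : Set ℝ // MeasurableSet T},
    |∫ x in Set.Icc (0:ℝ) 1 ∩ S.1, ∫ y in Set.Icc (0:ℝ) 1 ∩ T.1, (W₁ x y - W₂ x y)|

/-- A Lebesgue-measure-preserving bijection of `[0,1]`. -/
def MPB (σ : ℝ → ℝ) : Prop :=
  Set.BijOn σ (Set.Icc 0 1) (Set.Icc 0 1) ∧ MeasurePreserving σ unif01 unif01

/-- The weak cut distance `δ_□`. -/
def weakCutDist (W₁ W₂ : ℝ → ℝ → ℝ) : ℝ :=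
  ⨅ σ : {σ : ℝ → ℝ // MPB σ}, cutDist (fun x y => W₁ (σ.1 x) (σ.1 y)) W₂

/-- The step kernel `W_{Q_n}` associated to an `n × n` matrix `Q`:
it equals `Q i j` when `⌈n x⌉ = i, ⌈n y⌉ = j`. -/
def stepKernel (n : ℕ) (Q : Fin n → Fin n → ℝ) : ℝ → ℝ → ℝ := fun x y =>
  ∑ i : Fin n, ∑ j : Fin n,
    if x ∈ Set.Ioc (((i : ℕ) : ℝ)/n) ((((i : ℕ) : ℝ)+1)/n) ∧
       y ∈ Set.Ioc (((j : ℕ) : ℝ)/n) ((((j : ℕ) : ℝ)+1)/n)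
    then Q i j else 0

/-- Product over the edges of `H` (each edge counted once) of `f a b`. -/
def edgeProd {v : ℕ} (G : SimpleGraph (Fin v)) [DecidableRel G.Adj]
    (f : Fin v → Fin v → ℝ) : ℝ :=
  ∏ p ∈ Finset.univ.filter (fun p : Fin v × Fin v => G.Adj p.1 p.2 ∧ p.1 < p.2), f p.1 p.2

/-- The number of edges `|E(H)|`. -/
def edgeCard {v : ℕ} (G : SimpleGraph (Fin v)) [DecidableRel G.Adj] : ℕ :=
  (Finset.univ.filter (fun p : Fin v × Fin v => G.Adj p.1 p.2 ∧ p.1 < p.2)).card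

/-- The inhomogeneous U-statistic `U_n(X)` (sum over distinct indices). -/
def Ustat {X : Type*} {v : ℕ} (G : SimpleGraph (Fin v)) [DecidableRel G.Adj]
    (φ : (Fin v → X) → ℝ) (n : ℕ) (Q : Fin n → Fin n → ℝ) (x : Fin n → X) : ℝ :=
  (∑ i ∈ Finset.univ.filter (fun i : Fin v → Fin n => Function.Injective i),
      φ (x ∘ i) * edgeProd G (fun a b => Q (i a) (i b))) / (n : ℝ) ^ v

/-- The inhomogeneous V-statistic `V_n(X)` (sum over all indices). -/
def Vstat {X : Type*} {v : ℕ} (G : SimpleGraph (Fin v)) [DecidableRel G.Adj]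
    (φ : (Fin v → X) → ℝ) (n : ℕ) (Q : Fin n → Fin n → ℝ) (x : Fin n → X) : ℝ :=
  (∑ i : Fin v → Fin n, φ (x ∘ i) * edgeProd G (fun a b => Q (i a) (i b))) / (n : ℝ) ^ v

open Classical in
/-- Kullback-Leibler divergence `D(ν | ρ) ∈ [0,∞]`. -/
def KLdiv {α : Type*} [MeasurableSpace α] (ν ρ : Measure α) : ℝ≥0∞ :=
  if ν ≪ ρ ∧ Integrable (llr ν ρ) ν then ENNReal.ofReal (∫ a, llr ν ρ a ∂ν) else ⊤

open Classical in
/-- `ν` itself if it is a probability measure, junk value `0` otherwise. -/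
def probOr {α : Type*} [MeasurableSpace α] (ν : Measure α) : Measure α :=
  if IsProbabilityMeasure ν then ν else 0

instance {α : Type*} [MeasurableSpace α] (ν : Measure α) : SigmaFinite (probOr ν) := by
  unfold probOr
  split_ifs with h
  · haveI := h; infer_instance
  · infer_instance

/-- `v`-fold product of a (probability) measure. -/
def piProb {α : Type*} [MeasurableSpace α] (v : ℕ) (ν : Measure α) : Measure (Fin v → α) :=
  Measure.pi fun _ => probOr ν

/-- The functional `T_{W,φ}(ν) = E[φ(B₁,…,B_v) ∏_{(a,b) ∈ E(H)} W(A_a,A_b)]`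
for `(A_a,B_a)` i.i.d. with law `ν`. -/
def TWphi {X : Type*} [MeasurableSpace X] {v : ℕ} (G : SimpleGraph (Fin v))
    [DecidableRel G.Adj] (W : ℝ → ℝ → ℝ) (φ : (Fin v → X) → ℝ)
    (ν : Measure (ℝ × X)) : ℝ :=
  ∫ z : Fin v → ℝ × X,
    φ (fun a => (z a).2) * edgeProd G (fun a b => W (z a).1 (z b).1) ∂(piProb v ν)

/-- Membership in `𝒯ℳ`: probability measures on `[0,1] × 𝒳` whose first marginal
is uniform on `[0,1]`. -/
def inTM {X : Type*} [MeasurableSpace X] (ν : Measure (ℝ × X)) : Prop :=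
  IsProbabilityMeasure ν ∧ ν.map Prod.fst = unif01

/-- The rate function `I₀(t) = inf { D(ν|ρ) : ν ∈ 𝒯ℳ, D(ν|ρ) < ∞, T_{W,φ}(ν) = t }`. -/
def rate0 {X : Type*} [MeasurableSpace X] {v : ℕ} (G : SimpleGraph (Fin v))
    [DecidableRel G.Adj] (W : ℝ → ℝ → ℝ) (φ : (Fin v → X) → ℝ) (μ : Measure X)
    (t : ℝ) : ℝ≥0∞ :=
  ⨅ ν : {ν : Measure (ℝ × X) //
      inTM ν ∧ KLdiv ν (unif01.prod μ) ≠ ⊤ ∧ TWphi G W φ ν = t},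
    KLdiv ν.1 (unif01.prod μ)

/-- Tail assumption (T): `E_μ[e^{λ ψ(X)^p}] < ∞` for all `λ > 0`; for `p = ∞`
it means `ψ` is bounded. -/
def TailCond {X : Type*} [MeasurableSpace X] (μ : Measure X) (ψ : X → ℝ)
    (p : ℝ≥0∞) : Prop :=
  if p = ⊤ then ∃ C : ℝ, ∀ x, ψ x ≤ C
  else ∀ lam : ℝ, 0 < lam →
    ∫⁻ x, ENNReal.ofReal (Real.exp (lam * ψ x ^ p.toReal)) ∂μ < ⊤

/-- A sequence of random elements `T n` defined on probability spaces `(Ω n, P n)`,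
taking values in a topological space `E`, satisfies a large deviation principle at
speed `n` with good rate function `I`. -/
def SatisfiesLDP {E : Type*} [TopologicalSpace E] {Ω : ℕ → Type*}
    [∀ n, MeasurableSpace (Ω n)] (P : ∀ n, Measure (Ω n)) (T : ∀ n, Ω n → E)
    (I : E → ℝ≥0∞) : Prop :=
  (∀ c : ℝ≥0∞, c ≠ ⊤ → IsCompact {x | I x ≤ c}) ∧
  ∀ F : Set E, MeasurableSet[borel E] F →
    (-(⨅ x ∈ interior F, (I x : EReal)) ≤
      Filter.atTop.liminf fun n : ℕ =>
        (((n : ℝ)⁻¹ : ℝ) : EReal) * ENNReal.log (P n {ω | T n ω ∈ F})) ∧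
    (Filter.atTop.limsup (fun n : ℕ =>
        (((n : ℝ)⁻¹ : ℝ) : EReal) * ENNReal.log (P n {ω | T n ω ∈ F})) ≤
      -(⨅ x ∈ closure F, (I x : EReal)))

end
/-- The log-normalizing constant `Z_n(θ) = (1/n) log E_{μ^{⊗n}}[e^{nθ f_n(X)}]`. -/
noncomputable def ZnGen {X : Type*} [MeasurableSpace X] (μ : Measure X)
    [IsProbabilityMeasure μ] (f : ∀ n : ℕ, (Fin n → X) → ℝ) (n : ℕ) (θ : ℝ) : ℝ :=
  (n : ℝ)⁻¹ *
    Real.log (∫ x, Real.exp (n * θ * f n x) ∂(Measure.pi fun _ : Fin n => μ))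

/-- The Gibbs measure `R_{n,θ}` with Hamiltonian `f n`, having density
`exp(nθ f_n(x) − n Z_n(θ))` with respect to `μ^{⊗n}`. -/
noncomputable def GibbsMeasure {X : Type*} [MeasurableSpace X] (μ : Measure X)
    [IsProbabilityMeasure μ] (f : ∀ n : ℕ, (Fin n → X) → ℝ) (n : ℕ) (θ : ℝ) :
    Measure (Fin n → X) :=
  (Measure.pi fun _ : Fin n => μ).withDensity fun x =>
    ENNReal.ofReal (Real.exp (n * θ * f n x - n * ZnGen μ f n θ))

/-- The set `{θ T_{W,φ}(ν) − D(ν|ρ) : ν ∈ 𝒯ℳ, D(ν|ρ) < ∞}` whose supremum is `Z(θ)`. -/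
def Zset {X : Type*} [MeasurableSpace X] {v : ℕ} (G : SimpleGraph (Fin v))
    [DecidableRel G.Adj] (W : ℝ → ℝ → ℝ) (φ : (Fin v → X) → ℝ) (μ : Measure X)
    (θ : ℝ) : Set ℝ :=
  {z : ℝ | ∃ ν : Measure (ℝ × X), inTM ν ∧ KLdiv ν (unif01.prod μ) ≠ ⊤ ∧
    z = θ * TWphi G W φ ν - (KLdiv ν (unif01.prod μ)).toReal}
/-- The bivariate empirical measure `𝔏_n = (1/n) Σ_{i=1}^n δ_{(i/n, X_i)}`. -/
noncomputable def empMeas {X : Type*} [MeasurableSpace X] (n : ℕ) (x : Fin n → X) :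
    Measure (ℝ × X) :=
  (n : ℝ≥0∞)⁻¹ • ∑ i : Fin n, Measure.dirac ((((i : ℕ) : ℝ) + 1) / n, x i)

open Classical in
/-- Bundle a measure as a probability measure, with a default value in the junk case. -/
noncomputable def toProb {α : Type*} [MeasurableSpace α] (d : ProbabilityMeasure α)
    (ν : Measure α) : ProbabilityMeasure α :=
  if h : IsProbabilityMeasure ν then ⟨ν, h⟩ else d

/-- `ρ = Unif[0,1] ⊗ μ` as a probability measure. -/
noncomputable def rhoP {X : Type*} [MeasurableSpace X] (μ : Measure X)
    [IsProbabilityMeasure μ] : ProbabilityMeasure (ℝ × X) :=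
  ⟨unif01.prod μ, inferInstance⟩

/-- The bounded-Lipschitz distance `d_l` between two measures on `[0,1] × 𝒳`. -/
noncomputable def dBL {X : Type*} [MeasurableSpace X] [MetricSpace X]
    (ν₁ ν₂ : Measure (ℝ × X)) : ℝ :=
  ⨆ f : {f : ℝ × X → ℝ // LipschitzWith 1 f ∧ ∀ z, f z ∈ Set.Icc (-1 : ℝ) 1},
    |∫ z, f.1 z ∂ν₁ - ∫ z, f.1 z ∂ν₂|

/-- Distance from a measure to a set of measures, in the metric `d_l`. -/
noncomputable def dBLSet {X : Type*} [MeasurableSpace X] [MetricSpace X]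
    (ν : Measure (ℝ × X)) (F : Set (Measure (ℝ × X))) : ℝ :=
  ⨅ σ : F, dBL ν σ.1

/-- The set `F_θ` of maximizers of `ν ↦ θ T_{W,φ}(ν) − D(ν|ρ)` over
`{ν ∈ 𝒯ℳ : D(ν|ρ) < ∞}`. -/
def Fset {X : Type*} [MeasurableSpace X] {v : ℕ} (G : SimpleGraph (Fin v))
    [DecidableRel G.Adj] (W : ℝ → ℝ → ℝ) (φ : (Fin v → X) → ℝ) (μ : Measure X)
    (θ : ℝ) : Set (Measure (ℝ × X)) :=
  {ν | inTM ν ∧ KLdiv ν (unif01.prod μ) ≠ ⊤ ∧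
    ∀ σ : Measure (ℝ × X), inTM σ → KLdiv σ (unif01.prod μ) ≠ ⊤ →
      θ * TWphi G W φ σ - (KLdiv σ (unif01.prod μ)).toReal ≤
        θ * TWphi G W φ ν - (KLdiv ν (unif01.prod μ)).toReal}

open Classical in
/-- The rate function `I_θ(ν) = D(ν|ρ) − θ T_{W,φ}(ν) − inf_σ {D(σ|ρ) − θ T_{W,φ}(σ)}`,
extended by `+∞` outside `{ν ∈ 𝒯ℳ : D(ν|ρ) < ∞}`. -/
noncomputable def Itheta {X : Type*} [MeasurableSpace X] {v : ℕ}
    (G : SimpleGraph (Fin v)) [DecidableRel G.Adj] (W : ℝ → ℝ → ℝ)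
    (φ : (Fin v → X) → ℝ) (μ : Measure X) (θ : ℝ) (ν : Measure (ℝ × X)) : ℝ≥0∞ :=
  if inTM ν ∧ KLdiv ν (unif01.prod μ) ≠ ⊤ then
    ENNReal.ofReal ((KLdiv ν (unif01.prod μ)).toReal - θ * TWphi G W φ ν -
      sInf {z : ℝ | ∃ σ : Measure (ℝ × X), inTM σ ∧ KLdiv σ (unif01.prod μ) ≠ ⊤ ∧
        z = (KLdiv σ (unif01.prod μ)).toReal - θ * TWphi G W φ σ})
  else ⊤
/-- The limiting log-normalizing constant `Z(θ) = sup {θ T_{W,φ}(ν) − D(ν|ρ)}`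
as a function of `θ`. -/
noncomputable def Zfun {X : Type*} [MeasurableSpace X] {v : ℕ} (G : SimpleGraph (Fin v))
    [DecidableRel G.Adj] (W : ℝ → ℝ → ℝ) (φ : (Fin v → X) → ℝ) (μ : Measure X) :
    ℝ → ℝ :=
  fun θ => sSup (Zset G W φ μ θ)

/-!
For each admissible `ν` the affine function `θ' ↦ θ' T(ν) - D(ν|ρ)` lies below `Z`. If `ν ∈ F_θ` it
touches `Z` at `θ`, hence has the same slope there, so `T(ν) = Z'(θ) = t`. On the level set
`T = t` the quantities `θ T - D` and `-D` differ by a constant, so minimizing `D` on that level set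
and maximizing `θ T - D` globally have the same solutions.

`Z` is a finite supremum: Finner's inequality bounds `|T(ν)|` by
`‖ψ‖_{L^p(ν)}^v ‖W‖_{qΔ}^{|E(H)|}`, each vertex carrying total exponent at most `1/p + Δ/(qΔ) ≤ 1`,
and the tail assumption controls `θ` times this bound by `D(ν|ρ)` plus a constant through
`x s ≤ klFun x + exp s`. Finally `‖W‖_{qΔ} < ∞`, because averages over squares converge under the
cut distance, and Jensen's inequality, Fatou's lemma and Lebesgue differentiation turn this into
lower semicontinuity of `L^r` norms.
-/

/-! ### Finner's inequality -/

section Finner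

variable {κ : Type*} {E : Finset κ}

theorem lintegral_prod_rpow_le_of_sum_le_one {α : Type*} [MeasurableSpace α] {m : Measure α}
    [IsProbabilityMeasure m] {w : κ → ℝ} (hw : ∀ e ∈ E, 0 ≤ w e) (hsum : ∑ e ∈ E, w e ≤ 1)
    {g : κ → α → ℝ≥0∞} (hg : ∀ e ∈ E, AEMeasurable (g e) m) :
    ∫⁻ y, ∏ e ∈ E, g e y ^ w e ∂m ≤ ∏ e ∈ E, (∫⁻ y, g e y ∂m) ^ w e := by
  simpa using ENNReal.lintegral_mul_prod_norm_pow_le E (g := fun _ => 1) aemeasurable_const hg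
    (q := 1 - ∑ e ∈ E, w e) (by ring) (sub_nonneg.2 hsum) hw

variable {δ : Type*} [DecidableEq δ] {α : δ → Type*} [∀ i, MeasurableSpace (α i)]
  {m : ∀ i, Measure (α i)}

theorem lmarginal_update_of_dependsOn [∀ i, SigmaFinite (m i)] {t : Finset δ} {i : δ} (hit : i ∉ t)
    {A : Finset δ} (hiA : i ∉ A) {g : (∀ i, α i) → ℝ≥0∞} (hg : Measurable g) (hA : DependsOn g A)
    (x : ∀ i, α i) (y : α i) :
    (∫⋯∫⁻_t, g ∂m) (Function.update x i y) = (∫⋯∫⁻_t, g ∂m) x := by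
  rw [lmarginal_update_of_notMem hg hit]
  congr 1
  ext z
  exact hA fun j hj => Function.update_of_ne (ne_of_mem_of_not_mem hj hiA) _ _

variable [∀ i, IsProbabilityMeasure (m i)] {w : κ → ℝ} {s : κ → Finset δ}
  {f : κ → (∀ i, α i) → ℝ≥0∞}

theorem lmarginal_prod_rpow_le (hw : ∀ e ∈ E, 0 ≤ w e) (hf : ∀ e, Measurable (f e))
    (hs : ∀ e, DependsOn (f e) (s e)) (hsum : ∀ i, ∑ e ∈ E with i ∈ s e, w e ≤ 1)
    (t : Finset δ) (x : ∀ i, α i) :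
    (∫⋯∫⁻_t, fun x => ∏ e ∈ E, f e x ^ w e ∂m) x ≤ ∏ e ∈ E, (∫⋯∫⁻_t, f e ∂m) x ^ w e := by
  induction t using Finset.induction generalizing x with
  | empty => simp
  | insert i t hi ih =>
    let F : κ → α i → ℝ≥0∞ := fun e y => (∫⋯∫⁻_t, f e ∂m) (Function.update x i y)
    have hF : ∀ e, Measurable (F e) := fun e => ((hf e).lmarginal m).comp (measurable_update x)
    have hF_const : ∀ e ∈ E.filter (i ∉ s ·), ∀ y, F e y = (∫⋯∫⁻_t, f e ∂m) x := fun e he =>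
      lmarginal_update_of_dependsOn hi (Finset.mem_filter.1 he).2 (hf e) (hs e) x
    have h_off : ∀ y, ∏ e ∈ E with i ∉ s e, F e y ^ w e =
        ∏ e ∈ E with i ∉ s e, (∫⁻ y, F e y ∂m i) ^ w e := fun y =>
      Finset.prod_congr rfl fun e he => by simp only [hF_const e he, lintegral_const,
        measure_univ, mul_one]
    rw [lmarginal_insert _ (Finset.measurable_prod _ fun e _ => (hf e).pow_const _) hi]
    simp_rw [lmarginal_insert _ (hf _) hi]
    calc ∫⁻ y, (∫⋯∫⁻_t, fun x => ∏ e ∈ E, f e x ^ w e ∂m) (Function.update x i y) ∂m i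
        ≤ ∫⁻ y, ∏ e ∈ E, F e y ^ w e ∂m i := lintegral_mono fun y => ih _
      _ = (∫⁻ y, ∏ e ∈ E with i ∈ s e, F e y ^ w e ∂m i) *
            ∏ e ∈ E with i ∉ s e, (∫⁻ y, F e y ∂m i) ^ w e := by
          simp_rw [← Finset.prod_filter_mul_prod_filter_not E (i ∈ s ·), h_off]
          exact lintegral_mul_const _
            (Finset.measurable_prod _ fun e _ => (hF e).pow_const _)
      _ ≤ (∏ e ∈ E with i ∈ s e, (∫⁻ y, F e y ∂m i) ^ w e) *
            ∏ e ∈ E with i ∉ s e, (∫⁻ y, F e y ∂m i) ^ w e := by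
          gcongr
          exact lintegral_prod_rpow_le_of_sum_le_one (fun e he => hw e (Finset.mem_filter.1 he).1)
            (hsum i) fun e _ => (hF e).aemeasurable
      _ = ∏ e ∈ E, (∫⁻ y, F e y ∂m i) ^ w e := Finset.prod_filter_mul_prod_filter_not ..

variable [Fintype δ]

theorem lintegral_pi_prod_rpow_le (hw : ∀ e ∈ E, 0 ≤ w e) (hf : ∀ e, Measurable (f e))
    (hs : ∀ e, DependsOn (f e) (s e)) (hsum : ∀ i, ∑ e ∈ E with i ∈ s e, w e ≤ 1) :
    ∫⁻ x, ∏ e ∈ E, f e x ^ w e ∂Measure.pi m ≤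
      ∏ e ∈ E, (∫⁻ x, f e x ∂Measure.pi m) ^ w e := by
  obtain ⟨x⟩ := nonempty_of_isProbabilityMeasure (Measure.pi m)
  simpa only [lintegral_eq_lmarginal_univ x] using lmarginal_prod_rpow_le hw hf hs hsum .univ x

theorem lintegral_pi_prod_le_prod_eLpNorm_of_ne_top {p : κ → ℝ≥0∞} (hp : ∀ e ∈ E, p e ≠ 0)
    (hp' : ∀ e ∈ E, p e ≠ ⊤) (hf : ∀ e, Measurable (f e)) (hs : ∀ e, DependsOn (f e) (s e))
    (hsum : ∀ i, ∑ e ∈ E with i ∈ s e, (p e)⁻¹ ≤ 1) :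
    ∫⁻ x, ∏ e ∈ E, f e x ∂Measure.pi m ≤ ∏ e ∈ E, eLpNorm (f e) (p e) (Measure.pi m) := by
  have hp_pos : ∀ e ∈ E, 0 < (p e).toReal := fun e he => ENNReal.toReal_pos (hp e he) (hp' e he)
  calc ∫⁻ x, ∏ e ∈ E, f e x ∂Measure.pi m
      = ∫⁻ x, ∏ e ∈ E, (f e x ^ (p e).toReal) ^ (p e).toReal⁻¹ ∂Measure.pi m :=
        lintegral_congr fun x => Finset.prod_congr rfl fun e he =>
          (ENNReal.rpow_rpow_inv (hp_pos e he).ne' _).symm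
    _ ≤ ∏ e ∈ E, (∫⁻ x, f e x ^ (p e).toReal ∂Measure.pi m) ^ (p e).toReal⁻¹ := by
        refine lintegral_pi_prod_rpow_le (s := s) (fun e _ => by positivity)
          (fun e => (hf e).pow_const _)
          (fun e _ _ h => congrArg (· ^ (p e).toReal) (hs e h)) fun i => ?_
        simp_rw [← ENNReal.toReal_inv]
        rw [← ENNReal.toReal_sum fun e he => ENNReal.inv_ne_top.2 (hp e (Finset.mem_filter.1 he).1)]
        exact ENNReal.toReal_le_of_le_ofReal zero_le_one (by simpa using hsum i)
    _ = ∏ e ∈ E, eLpNorm (f e) (p e) (Measure.pi m) := Finset.prod_congr rfl fun e he => by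
        simp [eLpNorm_eq_lintegral_rpow_enorm_toReal (hp e he) (hp' e he)]

theorem lintegral_pi_prod_le_prod_eLpNorm {p : κ → ℝ≥0∞} (hp : ∀ e ∈ E, p e ≠ 0)
    (hf : ∀ e, Measurable (f e)) (hs : ∀ e, DependsOn (f e) (s e))
    (hsum : ∀ i, ∑ e ∈ E with i ∈ s e, (p e)⁻¹ ≤ 1) :
    ∫⁻ x, ∏ e ∈ E, f e x ∂Measure.pi m ≤ ∏ e ∈ E, eLpNorm (f e) (p e) (Measure.pi m) := by
  have h_top : ∀ᵐ x ∂Measure.pi m, ∀ e ∈ E.filter (¬ p · ≠ ⊤),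
      f e x ≤ eLpNorm (f e) (p e) (Measure.pi m) := by
    refine (eventually_all_finset _).2 fun e he => ?_
    rw [not_not.1 (Finset.mem_filter.1 he).2, eLpNorm_exponent_top]
    exact enorm_ae_le_eLpNormEssSup (f e) _
  rw [← Finset.prod_filter_mul_prod_filter_not E (p · ≠ ⊤)]
  calc ∫⁻ x, ∏ e ∈ E, f e x ∂Measure.pi m
      ≤ ∫⁻ x, (∏ e ∈ E with p e ≠ ⊤, f e x) *
          ∏ e ∈ E with ¬ p e ≠ ⊤, eLpNorm (f e) (p e) (Measure.pi m) ∂Measure.pi m := by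
        refine lintegral_mono_ae (h_top.mono fun x hx => ?_)
        rw [← Finset.prod_filter_mul_prod_filter_not E (p · ≠ ⊤)]
        gcongr with e he
        exact hx e he
    _ = (∫⁻ x, ∏ e ∈ E with p e ≠ ⊤, f e x ∂Measure.pi m) *
          ∏ e ∈ E with ¬ p e ≠ ⊤, eLpNorm (f e) (p e) (Measure.pi m) :=
        lintegral_mul_const _ (Finset.measurable_prod _ fun e _ => hf e)
    _ ≤ _ := by
        gcongr
        refine lintegral_pi_prod_le_prod_eLpNorm_of_ne_top (s := s)
          (fun e he => hp e (Finset.mem_filter.1 he).1) (fun e he => (Finset.mem_filter.1 he).2)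
          hf hs fun i => (Finset.sum_le_sum_of_subset ?_).trans (hsum i)
        exact Finset.filter_subset_filter _ (Finset.filter_subset _ _)

end Finner

/-! ### Homomorphism-type integrals -/

section GraphIntegral

variable {v : ℕ} (G : SimpleGraph (Fin v)) [DecidableRel G.Adj]

/-- The edges of `G` as pairs `(a, b)` with `a < b`, so that each edge is listed once: the index
set of the product `edgeProd`. -/
def orientedEdges : Finset (Fin v × Fin v) :=
  Finset.univ.filter fun e => G.Adj e.1 e.2 ∧ e.1 < e.2

variable {G} in
theorem mem_orientedEdges {e : Fin v × Fin v} :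
    e ∈ orientedEdges G ↔ G.Adj e.1 e.2 ∧ e.1 < e.2 := by
  simp [orientedEdges]

variable {G} in
theorem maxDegree_pos_of_mem_orientedEdges {e : Fin v × Fin v} (he : e ∈ orientedEdges G) :
    0 < G.maxDegree :=
  ((G.degree_pos_iff_exists_adj e.1).2 ⟨e.2, (mem_orientedEdges.1 he).1⟩).trans_le
    (G.degree_le_maxDegree e.1)

theorem card_orientedEdges_filter_le_degree (i : Fin v) :
    ((orientedEdges G).filter fun e => i = e.1 ∨ i = e.2).card ≤ G.degree i := by
  rw [← G.card_incidenceFinset_eq_degree]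
  refine Finset.card_le_card_of_injOn (fun e => s(e.1, e.2)) (fun e he => ?_) ?_
  · obtain ⟨he, hi⟩ := Finset.mem_filter.1 he
    simp [SimpleGraph.incidenceSet, (mem_orientedEdges.1 he).1, hi]
  · rintro ⟨a, b⟩ he ⟨c, d⟩ he' h
    have hab := (mem_orientedEdges.1 (Finset.mem_filter.1 he).1).2
    have hcd := (mem_orientedEdges.1 (Finset.mem_filter.1 he').1).2
    rcases Sym2.eq_iff.1 h with ⟨rfl, rfl⟩ | ⟨rfl, rfl⟩
    · rfl
    · exact absurd hab hcd.asymm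

theorem sum_orientedEdges_inv_le (q : ℝ≥0∞) (i : Fin v) :
    ∑ e ∈ orientedEdges G with i = e.1 ∨ i = e.2, (q * (G.maxDegree : ℝ≥0∞))⁻¹ ≤ q⁻¹ := by
  have h_card : ((orientedEdges G).filter fun e => i = e.1 ∨ i = e.2).card ≤ G.maxDegree :=
    (card_orientedEdges_filter_le_degree G i).trans (G.degree_le_maxDegree i)
  rw [Finset.sum_const, nsmul_eq_mul]
  rcases Nat.eq_zero_or_pos G.maxDegree with h0 | hpos
  · simp [Nat.le_zero.1 (h0 ▸ h_card)]
  · rw [ENNReal.mul_inv (.inr (ENNReal.natCast_ne_top _)) (.inr (by simpa using hpos.ne')),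
      mul_left_comm]
    refine mul_le_of_le_one_right' ?_
    rw [← div_eq_mul_inv]
    exact ENNReal.div_le_of_le_mul (by rw [one_mul]; exact_mod_cast h_card)

theorem sum_disjSum_orientedEdges_inv_le {p q : ℝ≥0∞} (hpq : p⁻¹ + q⁻¹ ≤ 1) (i : Fin v) :
    ∑ x ∈ Finset.univ.disjSum (orientedEdges G) with
        i ∈ Sum.elim (fun a => ({a} : Finset (Fin v))) (fun e => {e.1, e.2}) x,
      (Sum.elim (fun _ => p) (fun _ => q * (G.maxDegree : ℝ≥0∞)) x)⁻¹ ≤ 1 := by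
  simp only [Finset.sum_filter, Finset.sum_disjSum, Sum.elim_inl, Sum.elim_inr,
    Finset.mem_singleton, Finset.mem_insert]
  rw [← Finset.sum_filter, ← Finset.sum_filter, Finset.filter_eq, if_pos (Finset.mem_univ i),
    Finset.sum_singleton]
  exact (add_le_add_right (sum_orientedEdges_inv_le G q i) _).trans hpq

theorem measurePreserving_eval_prodMk_eval {δ : Type*} [Fintype δ] {α : δ → Type*}
    [∀ i, MeasurableSpace (α i)] (m : ∀ i, Measure (α i)) [∀ i, IsProbabilityMeasure (m i)]
    {i j : δ} (hij : i ≠ j) :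
    MeasurePreserving (fun x : ∀ i, α i => (x i, x j)) (Measure.pi m) ((m i).prod (m j)) where
  measurable := by fun_prop
  map_eq := by
    have h_indep := (ProbabilityTheory.iIndepFun_pi (μ := m) (X := fun _ x => x)
      fun _ => aemeasurable_id).indepFun hij
    rw [(ProbabilityTheory.indepFun_iff_map_prod_eq_prod_map_map
      (measurable_pi_apply i).aemeasurable (measurable_pi_apply j).aemeasurable).1 h_indep]
    congr 1
    exacts [(measurePreserving_eval m i).map_eq, (measurePreserving_eval m j).map_eq]

theorem lintegral_pi_prod_mul_prod_orientedEdges_le {α : Type*} [MeasurableSpace α]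
    (ν : Measure α) [IsProbabilityMeasure ν] {u : α → ℝ≥0∞} (hu : Measurable u)
    {k : α × α → ℝ≥0∞} (hk : Measurable k) {p q : ℝ≥0∞} (hpq : p⁻¹ + q⁻¹ ≤ 1) :
    ∫⁻ z, (∏ a, u (z a)) * ∏ e ∈ orientedEdges G, k (z e.1, z e.2)
        ∂(Measure.pi fun _ : Fin v => ν) ≤
      eLpNorm u p ν ^ v * eLpNorm k (q * G.maxDegree) (ν.prod ν) ^ (orientedEdges G).card := by
  let factor : Fin v ⊕ Fin v × Fin v → (Fin v → α) → ℝ≥0∞ :=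
    Sum.elim (fun a z => u (z a)) fun e z => k (z e.1, z e.2)
  let vars : Fin v ⊕ Fin v × Fin v → Finset (Fin v) := Sum.elim (fun a => {a}) fun e => {e.1, e.2}
  let expo : Fin v ⊕ Fin v × Fin v → ℝ≥0∞ := Sum.elim (fun _ => p) fun _ => q * G.maxDegree
  have h_expo : ∀ x ∈ Finset.univ.disjSum (orientedEdges G), expo x ≠ 0 := by
    have hp : p ≠ 0 := fun h => by simp [h] at hpq
    have hq : q ≠ 0 := fun h => by simp [h] at hpq
    rintro (a | e) he
    · exact hp
    · exact mul_ne_zero hq (Nat.cast_ne_zero.2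
        (maxDegree_pos_of_mem_orientedEdges (Finset.inr_mem_disjSum.1 he)).ne')
  have h_meas : ∀ x, Measurable (factor x) := by
    rintro (a | e)
    · exact hu.comp (measurable_pi_apply a)
    · exact hk.comp ((measurable_pi_apply e.1).prodMk (measurable_pi_apply e.2))
  have h_vars : ∀ x, DependsOn (factor x) (vars x) := by
    rintro (a | e) z z' h
    · simp only [factor, Sum.elim_inl, h a (by simp [vars])]
    · simp only [factor, Sum.elim_inr, h e.1 (by simp [vars]), h e.2 (by simp [vars])]
  have h_vertex : ∀ a ∈ Finset.univ,
      eLpNorm (factor (.inl a)) p (Measure.pi fun _ => ν) = eLpNorm u p ν := fun a _ =>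
    eLpNorm_comp_measurePreserving hu.aestronglyMeasurable (measurePreserving_eval (fun _ => ν) a)
  have h_edge : ∀ e ∈ orientedEdges G, eLpNorm (factor (.inr e)) (q * G.maxDegree)
      (Measure.pi fun _ => ν) = eLpNorm k (q * G.maxDegree) (ν.prod ν) := fun e he =>
    eLpNorm_comp_measurePreserving hk.aestronglyMeasurable
      (measurePreserving_eval_prodMk_eval (fun _ => ν) (mem_orientedEdges.1 he).2.ne)
  have h_finner := lintegral_pi_prod_le_prod_eLpNorm (m := fun _ => ν) h_expo h_meas h_vars
    (sum_disjSum_orientedEdges_inv_le G hpq)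
  simp only [Finset.prod_disjSum] at h_finner
  refine h_finner.trans_eq ?_
  simp only [expo, Sum.elim_inl, Sum.elim_inr]
  rw [Finset.prod_congr rfl h_vertex, Finset.prod_congr rfl h_edge]
  simp

end GraphIntegral

/-! ### Moments under an entropy bound -/

section Entropy

open InformationTheory

theorem mul_le_klFun_add_exp {x : ℝ} (hx : 0 ≤ x) (s : ℝ) : x * s ≤ klFun x + Real.exp s := by
  rcases hx.eq_or_lt with rfl | hx
  · simp only [zero_mul, klFun_zero]
    positivity
  · have := Real.add_one_le_exp (s - Real.log x)
    rw [Real.exp_sub, Real.exp_log hx, le_div_iff₀ hx] at this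
    rw [klFun]
    linarith

variable {α : Type*} [MeasurableSpace α] {ρ : Measure α}

theorem lintegral_ofReal_le_klDiv_add_lintegral_exp (ν ρ : Measure α) [IsFiniteMeasure ν]
    [IsFiniteMeasure ρ] {h : α → ℝ} (hh : Measurable h) :
    ∫⁻ x, ENNReal.ofReal (h x) ∂ν ≤
      klDiv ν ρ + ∫⁻ x, ENNReal.ofReal (Real.exp (h x)) ∂ρ := by
  by_cases hac : ν ≪ ρ
  swap
  · simp [klDiv_of_not_ac hac]
  rw [klDiv_eq_lintegral_klFun_of_ac hac,
    ← lintegral_rnDeriv_mul hac hh.ennreal_ofReal.aemeasurable,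
    ← lintegral_add_right _ hh.exp.ennreal_ofReal]
  refine lintegral_mono_ae ((ν.rnDeriv_lt_top ρ).mono fun x hx => ?_)
  rw [← ENNReal.ofReal_add (klFun_nonneg ENNReal.toReal_nonneg) (Real.exp_nonneg _)]
  calc ν.rnDeriv ρ x * ENNReal.ofReal (h x)
      = ENNReal.ofReal ((ν.rnDeriv ρ x).toReal * h x) := by
        rw [ENNReal.ofReal_mul ENNReal.toReal_nonneg, ENNReal.ofReal_toReal hx.ne]
    _ ≤ _ := ENNReal.ofReal_le_ofReal (mul_le_klFun_add_exp ENNReal.toReal_nonneg _)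

theorem KLdiv_eq_klDiv (ν ρ : Measure α) [IsProbabilityMeasure ν] [IsProbabilityMeasure ρ] :
    KLdiv ν ρ = klDiv ν ρ := by
  rw [KLdiv]
  split_ifs with h
  · simp [klDiv_of_ac_of_integrable h.1 h.2]
  · exact (not_not.1 (klDiv_ne_top_iff.not.2 h)).symm

theorem TailCond.comp_snd {β : Type*} [MeasurableSpace β] (m : Measure β)
    [IsProbabilityMeasure m] [SFinite ρ] {ψ : α → ℝ} (hψ : Measurable ψ) {p : ℝ≥0∞}
    (h : TailCond ρ ψ p) : TailCond (m.prod ρ) (fun z => ψ z.2) p := by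
  rw [TailCond] at h ⊢
  split_ifs at h ⊢ with hp
  · exact h.imp fun C hC z => hC z.2
  · intro lam hlam
    rw [measurePreserving_snd.lintegral_comp
      (f := fun x => ENNReal.ofReal (Real.exp (lam * ψ x ^ p.toReal))) (by fun_prop)]
    exact h lam hlam

theorem eLpNorm_pow_le_one_add_lintegral {ν : Measure α} {ψ : α → ℝ} {v : ℕ} {p : ℝ≥0∞}
    (hp : p ≠ 0) (hp_top : p ≠ ⊤) (hvp : v ≤ p) :
    eLpNorm ψ p ν ^ v ≤ 1 + ∫⁻ x, ‖ψ x‖ₑ ^ p.toReal ∂ν := by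
  have hp_pos : 0 < p.toReal := ENNReal.toReal_pos hp hp_top
  have hvp' : 1 / p.toReal * v ≤ 1 := by
    rw [one_div_mul_eq_div, div_le_one hp_pos]
    simpa using ENNReal.toReal_mono hp_top hvp
  rw [eLpNorm_eq_lintegral_rpow_enorm_toReal hp hp_top, ← ENNReal.rpow_natCast, ← ENNReal.rpow_mul]
  set I := ∫⁻ x, ‖ψ x‖ₑ ^ p.toReal ∂ν
  calc I ^ (1 / p.toReal * v) ≤ (1 + I) ^ (1 / p.toReal * v) := by gcongr; exact le_add_self
    _ ≤ (1 + I) ^ (1 : ℝ) := ENNReal.rpow_le_rpow_of_exponent_le le_self_add hvp'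
    _ = 1 + I := ENNReal.rpow_one _

theorem TailCond.exists_mul_eLpNorm_pow_le [IsProbabilityMeasure ρ] {ψ : α → ℝ}
    (hψ : Measurable ψ) (hψ_nonneg : ∀ x, 0 ≤ ψ x) {v : ℕ} {p : ℝ≥0∞} (hp : p ≠ 0)
    (hvp : v ≤ p) (h : TailCond ρ ψ p) {L : ℝ≥0∞} (hL : L ≠ ⊤) :
    ∃ M ≠ ⊤, ∀ ν : Measure α, IsProbabilityMeasure ν →
      L * eLpNorm ψ p ν ^ v ≤ KLdiv ν ρ + M := by
  rw [TailCond] at h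
  split_ifs at h with hp_top
  · obtain ⟨C, hC⟩ := h
    refine ⟨L * ENNReal.ofReal C ^ v, by finiteness, fun ν _ => le_add_left ?_⟩
    gcongr
    rw [hp_top, eLpNorm_exponent_top]
    refine eLpNormEssSup_le_of_ae_enorm_bound (.of_forall fun x => ?_)
    rw [Real.enorm_of_nonneg (hψ_nonneg x)]
    exact ENNReal.ofReal_le_ofReal (hC x)
  · have hlam : 0 < L.toReal + 1 := by positivity
    refine ⟨L + ∫⁻ x, ENNReal.ofReal (Real.exp ((L.toReal + 1) * ψ x ^ p.toReal)) ∂ρ,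
      ENNReal.add_ne_top.2 ⟨hL, (h _ hlam).ne⟩, fun ν _ => ?_⟩
    have h_moment : L * ∫⁻ x, ‖ψ x‖ₑ ^ p.toReal ∂ν ≤
        ∫⁻ x, ENNReal.ofReal ((L.toReal + 1) * ψ x ^ p.toReal) ∂ν := by
      rw [← lintegral_const_mul _ (by fun_prop)]
      refine lintegral_mono fun x => ?_
      rw [ENNReal.ofReal_mul hlam.le, Real.enorm_of_nonneg (hψ_nonneg x),
        ENNReal.ofReal_rpow_of_nonneg (hψ_nonneg x) ENNReal.toReal_nonneg]
      gcongr
      exact (ENNReal.le_ofReal_iff_toReal_le hL hlam.le).2 (by linarith)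
    calc L * eLpNorm ψ p ν ^ v ≤ L * (1 + ∫⁻ x, ‖ψ x‖ₑ ^ p.toReal ∂ν) := by
          gcongr
          exact eLpNorm_pow_le_one_add_lintegral hp hp_top hvp
      _ ≤ L + ∫⁻ x, ENNReal.ofReal ((L.toReal + 1) * ψ x ^ p.toReal) ∂ν := by
          rw [mul_add, mul_one]
          gcongr
      _ ≤ L + (klDiv ν ρ +
            ∫⁻ x, ENNReal.ofReal (Real.exp ((L.toReal + 1) * ψ x ^ p.toReal)) ∂ρ) := by
          gcongr
          exact lintegral_ofReal_le_klDiv_add_lintegral_exp ν ρ (by fun_prop)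
      _ = _ := by rw [KLdiv_eq_klDiv, add_left_comm]

end Entropy

section Functional

theorem enorm_finset_prod {ι F : Type*} [NormedField F] (s : Finset ι) (f : ι → F) :
    ‖∏ i ∈ s, f i‖ₑ = ∏ i ∈ s, ‖f i‖ₑ := by
  simp only [enorm_eq_nnnorm, nnnorm_prod, ENNReal.ofNNReal_finsetProd]

variable {X : Type*} {v : ℕ} {G : SimpleGraph (Fin v)} [DecidableRel G.Adj]
  {W : ℝ → ℝ → ℝ} {φ : (Fin v → X) → ℝ} {ψ : X → ℝ} {p q : ℝ≥0∞}

theorem enorm_mul_edgeProd_le (hdom : ∀ y : Fin v → X, |φ y| ≤ ∏ a, ψ (y a))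
    (z : Fin v → ℝ × X) :
    ‖φ (fun a => (z a).2) * edgeProd G fun a b => W (z a).1 (z b).1‖ₑ ≤
      (∏ a, ‖ψ (z a).2‖ₑ) * ∏ e ∈ orientedEdges G, ‖W (z e.1).1 (z e.2).1‖ₑ := by
  rw [enorm_mul]
  refine mul_le_mul' ?_ (enorm_finset_prod _ _).le
  rw [← enorm_finset_prod, Real.enorm_eq_ofReal_abs, Real.enorm_eq_ofReal_abs]
  exact ENNReal.ofReal_le_ofReal ((hdom _).trans (le_abs_self _))

variable [MeasurableSpace X]

theorem eLpNorm_uncurry_map_fst_eq_kerNorm {ν : Measure (ℝ × X)} (hν : inTM ν)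
    (hW : Measurable (Function.uncurry W)) (r : ℝ≥0∞) :
    eLpNorm (fun z : (ℝ × X) × (ℝ × X) => W z.1.1 z.2.1) r (ν.prod ν) = kerNorm W r := by
  have := hν.1
  have h_fst : MeasurePreserving Prod.fst ν unif01 := ⟨measurable_fst, hν.2⟩
  have hW' : Measurable fun z : ℝ × ℝ => W z.1 z.2 := hW
  rw [kerNorm, ← eLpNorm_comp_measurePreserving hW'.aestronglyMeasurable (h_fst.prod h_fst)]
  simp only [Function.comp_def, Prod.map_fst, Prod.map_snd]

theorem enorm_TWphi_le {ν : Measure (ℝ × X)} (hν : inTM ν)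
    (hW : Measurable (Function.uncurry W)) (hψ : Measurable ψ)
    (hdom : ∀ y : Fin v → X, |φ y| ≤ ∏ a, ψ (y a)) (hpq : p⁻¹ + q⁻¹ ≤ 1) :
    ‖TWphi G W φ ν‖ₑ ≤
      eLpNorm (fun z => ψ z.2) p ν ^ v * kerNorm W (q * G.maxDegree) ^ edgeCard G := by
  have hprob := hν.1
  have h_piProb : piProb v ν = Measure.pi fun _ => ν := by simp only [piProb, probOr, if_pos hprob]
  have hk : Measurable fun z : (ℝ × X) × (ℝ × X) => ‖W z.1.1 z.2.1‖ₑ :=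
    (hW.comp ((measurable_fst.comp measurable_fst).prodMk
      (measurable_fst.comp measurable_snd))).enorm
  rw [TWphi, h_piProb]
  calc _ ≤ ∫⁻ z : Fin v → ℝ × X, ‖φ (fun a => (z a).2) *
          edgeProd G fun a b => W (z a).1 (z b).1‖ₑ ∂(Measure.pi fun _ => ν) :=
        enorm_integral_le_lintegral_enorm _
    _ ≤ ∫⁻ z : Fin v → ℝ × X, (∏ a, ‖ψ (z a).2‖ₑ) *
          ∏ e ∈ orientedEdges G, ‖W (z e.1).1 (z e.2).1‖ₑ ∂(Measure.pi fun _ => ν) :=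
        lintegral_mono fun z => enorm_mul_edgeProd_le hdom z
    _ ≤ eLpNorm (fun z => ‖ψ z.2‖ₑ) p ν ^ v *
          eLpNorm (fun z : (ℝ × X) × (ℝ × X) => ‖W z.1.1 z.2.1‖ₑ) (q * G.maxDegree)
            (ν.prod ν) ^ (orientedEdges G).card :=
        lintegral_pi_prod_mul_prod_orientedEdges_le G ν (u := fun z => ‖ψ z.2‖ₑ)
          (hψ.comp measurable_snd).enorm hk hpq
    _ = eLpNorm (fun z => ψ z.2) p ν ^ v * kerNorm W (q * G.maxDegree) ^ edgeCard G := by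
        rw [eLpNorm_enorm, eLpNorm_enorm, eLpNorm_uncurry_map_fst_eq_kerNorm hν hW]
        rfl

theorem exists_enorm_mul_TWphi_le_KLdiv_add (μ : Measure X) [IsProbabilityMeasure μ]
    (hW : Measurable (Function.uncurry W)) (hψ : Measurable ψ) (hψ_nonneg : ∀ x, 0 ≤ ψ x)
    (hdom : ∀ y : Fin v → X, |φ y| ≤ ∏ a, ψ (y a)) (hvp : v ≤ p) (hTail : TailCond μ ψ p)
    (hpq : p⁻¹ + q⁻¹ ≤ 1) (hWq : kerNorm W (q * G.maxDegree) ≠ ⊤) (θ : ℝ) :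
    ∃ M ≠ ⊤, ∀ ν : Measure (ℝ × X), inTM ν →
      ‖θ * TWphi G W φ ν‖ₑ ≤ KLdiv ν (unif01.prod μ) + M := by
  have hp : p ≠ 0 := fun h => by simp [h] at hpq
  obtain ⟨M, hM, hle⟩ := (hTail.comp_snd unif01 hψ).exists_mul_eLpNorm_pow_le
    (hψ.comp measurable_snd) (fun z => hψ_nonneg z.2) hp hvp
    (L := ‖θ‖ₑ * kerNorm W (q * G.maxDegree) ^ edgeCard G) (by finiteness)
  refine ⟨M, hM, fun ν hν => le_trans ?_ (hle ν hν.1)⟩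
  rw [enorm_mul, mul_assoc, mul_comm (_ ^ edgeCard G)]
  gcongr
  exact enorm_TWphi_le hν hW hψ hdom hpq

theorem bddAbove_Zset (μ : Measure X) [IsProbabilityMeasure μ]
    (hW : Measurable (Function.uncurry W)) (hψ : Measurable ψ) (hψ_nonneg : ∀ x, 0 ≤ ψ x)
    (hdom : ∀ y : Fin v → X, |φ y| ≤ ∏ a, ψ (y a)) (hvp : v ≤ p) (hTail : TailCond μ ψ p)
    (hpq : p⁻¹ + q⁻¹ ≤ 1) (hWq : kerNorm W (q * G.maxDegree) ≠ ⊤) (θ : ℝ) :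
    BddAbove (Zset G W φ μ θ) := by
  obtain ⟨M, hM, hle⟩ :=
    exists_enorm_mul_TWphi_le_KLdiv_add μ hW hψ hψ_nonneg hdom hvp hTail hpq hWq θ
  refine ⟨M.toReal, ?_⟩
  rintro _ ⟨ν, hν, hKL, rfl⟩
  have h_abs : |θ * TWphi G W φ ν| ≤ (KLdiv ν (unif01.prod μ)).toReal + M.toReal := by
    rw [← ENNReal.toReal_add hKL hM, ← Real.norm_eq_abs, ← toReal_enorm]
    exact ENNReal.toReal_mono (ENNReal.add_ne_top.2 ⟨hKL, hM⟩) (hle ν hν)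
  linarith [le_abs_self (θ * TWphi G W φ ν)]

end Functional

/-! ### Duality -/

section Duality

variable {α : Type*} {S : Set α} {T D : α → ℝ} {θ : ℝ}

/- Each `θ' ↦ θ' * T x - D x` lies below the supremum and touches it at `θ`, so the two have
the same slope there. -/
theorem eq_deriv_sSup_of_isMaxOn {x : α} (hx : x ∈ S)
    (hmax : IsMaxOn (fun y => θ * T y - D y) S x)
    (hbdd : ∀ θ', BddAbove ((fun y => θ' * T y - D y) '' S))
    (hdiff : DifferentiableAt ℝ (fun θ' => sSup ((fun y => θ' * T y - D y) '' S)) θ) :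
    T x = deriv (fun θ' => sSup ((fun y => θ' * T y - D y) '' S)) θ := by
  set Z : ℝ → ℝ := fun θ' => sSup ((fun y => θ' * T y - D y) '' S)
  have hZ_le : ∀ θ', θ' * T x - D x ≤ Z θ' := fun θ' => le_csSup (hbdd θ') (mem_image_of_mem _ hx)
  have hZ_eq : Z θ = θ * T x - D x :=
    IsGreatest.csSup_eq ⟨mem_image_of_mem _ hx, forall_mem_image.2 hmax⟩
  have h_min : IsLocalMin (fun θ' => Z θ' - θ' * T x) θ :=
    .of_forall fun θ' => by linarith [hZ_le θ']
  have h_zero := h_min.hasDerivAt_eq_zero (hdiff.hasDerivAt.sub (hasDerivAt_mul_const (T x)))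
  linarith

theorem sep_isMinOn_level_eq_sep_isMaxOn {t : ℝ}
    (h_level : ∀ x ∈ S, IsMaxOn (fun y => θ * T y - D y) S x → T x = t)
    (h_exists : ∃ x ∈ S, IsMaxOn (fun y => θ * T y - D y) S x) :
    {x ∈ {x ∈ S | T x = t} | IsMinOn D {x ∈ S | T x = t} x} =
      {x ∈ S | IsMaxOn (fun y => θ * T y - D y) S x} := by
  ext x
  constructor
  · rintro ⟨⟨hx, hxt⟩, hmin⟩
    obtain ⟨x₀, hx₀, hmax₀⟩ := h_exists
    have hD : D x ≤ D x₀ := hmin ⟨hx₀, h_level x₀ hx₀ hmax₀⟩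
    refine ⟨hx, isMaxOn_iff.2 fun y hy => (isMaxOn_iff.1 hmax₀ y hy).trans ?_⟩
    simp only [h_level x₀ hx₀ hmax₀, hxt]
    linarith
  · rintro ⟨hx, hmax⟩
    have hxt := h_level x hx hmax
    refine ⟨⟨hx, hxt⟩, fun y hy => ?_⟩
    have : θ * T y - D y ≤ θ * T x - D x := hmax hy.1
    rw [hy.2, hxt] at this
    exact sub_le_sub_iff_left _ |>.1 this

end Duality

/-! ### Local averages and lower semicontinuity of `L^p` norms -/

section LocalAverage

open Metric ProbabilityTheory

theorem enorm_integral_le_eLpNorm {α F : Type*} [MeasurableSpace α]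
    [NormedAddCommGroup F] [NormedSpace ℝ F] {f : α → F} {p : ℝ≥0∞} {κ : Measure α}
    [IsProbabilityMeasure κ] (hf : AEStronglyMeasurable f κ) (hp : 1 ≤ p) :
    ‖∫ u, f u ∂κ‖ₑ ≤ eLpNorm f p κ :=
  (enorm_integral_le_lintegral_enorm f).trans
    (eLpNorm_one_eq_lintegral_enorm.symm.trans_le (eLpNorm_le_eLpNorm_of_exponent_le hp hf))

variable {E F : Type*} [NormedAddCommGroup E] [MeasurableSpace E]
  [NormedAddCommGroup F] [NormedSpace ℝ F] {f : E → F} {p : ℝ≥0∞}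

section Translate

variable [MeasurableAdd₂ E] {μ κ : Measure E} [SFinite μ] [μ.IsAddRightInvariant]
  [IsProbabilityMeasure κ]

theorem eLpNormEssSup_integral_add_le (hf : StronglyMeasurable f) :
    eLpNormEssSup (fun z => ∫ u, f (z + u) ∂κ) μ ≤ eLpNormEssSup f μ := by
  have h_meas : MeasurableSet {x : E × E | ‖f (x.1 + x.2)‖ₑ ≤ eLpNormEssSup f μ} :=
    measurableSet_le (hf.comp_measurable measurable_add).enorm measurable_const
  have h_ae : ∀ᵐ z ∂μ, ∀ᵐ u ∂κ, ‖f (z + u)‖ₑ ≤ eLpNormEssSup f μ :=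
    (Measure.ae_ae_comm h_meas).2 <| .of_forall fun u =>
      (measurePreserving_add_right μ u).quasiMeasurePreserving.ae
        (enorm_ae_le_eLpNormEssSup f μ)
  refine eLpNormEssSup_le_of_ae_enorm_bound (h_ae.mono fun z hz => ?_)
  calc ‖∫ u, f (z + u) ∂κ‖ₑ ≤ ∫⁻ u, ‖f (z + u)‖ₑ ∂κ := enorm_integral_le_lintegral_enorm _
    _ ≤ ∫⁻ _, eLpNormEssSup f μ ∂κ := lintegral_mono_ae hz
    _ = eLpNormEssSup f μ := by simp

theorem eLpNorm_integral_add_le (hf : StronglyMeasurable f) (hp : 1 ≤ p) :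
    eLpNorm (fun z => ∫ u, f (z + u) ∂κ) p μ ≤ eLpNorm f p μ := by
  rcases eq_or_ne p ⊤ with rfl | hp_top
  · simpa only [eLpNorm_exponent_top] using eLpNormEssSup_integral_add_le hf
  have hp0 : p ≠ 0 := (zero_lt_one.trans_le hp).ne'
  have hp_pos : 0 < p.toReal := ENNReal.toReal_pos hp0 hp_top
  rw [eLpNorm_eq_lintegral_rpow_enorm_toReal hp0 hp_top,
    eLpNorm_eq_lintegral_rpow_enorm_toReal hp0 hp_top]
  gcongr ?_ ^ _
  have h_jensen : ∀ z, ‖∫ u, f (z + u) ∂κ‖ₑ ^ p.toReal ≤ ∫⁻ u, ‖f (z + u)‖ₑ ^ p.toReal ∂κ := by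
    intro z
    rw [← ENNReal.le_rpow_inv_iff hp_pos, ← one_div,
      ← eLpNorm_eq_lintegral_rpow_enorm_toReal hp0 hp_top]
    exact enorm_integral_le_eLpNorm
      (hf.comp_measurable (measurable_const_add z)).aestronglyMeasurable hp
  calc ∫⁻ z, ‖∫ u, f (z + u) ∂κ‖ₑ ^ p.toReal ∂μ
      ≤ ∫⁻ z, ∫⁻ u, ‖f (z + u)‖ₑ ^ p.toReal ∂κ ∂μ := lintegral_mono h_jensen
    _ = ∫⁻ u, ∫⁻ z, ‖f (z + u)‖ₑ ^ p.toReal ∂μ ∂κ :=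
        lintegral_lintegral_swap
          ((hf.comp_measurable measurable_add).enorm.pow_const _).aemeasurable
    _ = ∫⁻ _, ∫⁻ z, ‖f z‖ₑ ^ p.toReal ∂μ ∂κ := by
        simp_rw [lintegral_add_right_eq_self (μ := μ) fun z => ‖f z‖ₑ ^ p.toReal]
    _ = ∫⁻ z, ‖f z‖ₑ ^ p.toReal ∂μ := by simp

end Translate

variable [BorelSpace E] {μ : Measure E} [μ.IsAddHaarMeasure]

theorem setAverage_closedBall_eq_integral_add (f : E → F) (z : E) (ε : ℝ) :
    ⨍ w in closedBall z ε, f w ∂μ = ∫ u, f (z + u) ∂μ[|closedBall 0 ε] := by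
  have h_pre : (z + ·) ⁻¹' closedBall z ε = closedBall 0 ε := by ext; simp
  rw [setAverage_eq, ProbabilityTheory.cond, integral_smul_measure, ENNReal.toReal_inv,
    ← measureReal_def, ← h_pre,
    (measurePreserving_add_left μ z).setIntegral_preimage_emb (measurableEmbedding_addLeft z),
    h_pre, measureReal_def, measureReal_def, Measure.addHaar_closedBall_center]

variable [NormedSpace ℝ E] [FiniteDimensional ℝ E]

theorem eLpNorm_setAverage_closedBall_le (hf : StronglyMeasurable f) (hp : 1 ≤ p) {ε : ℝ}
    (hε : 0 < ε) :
    eLpNorm (fun z => ⨍ w in closedBall z ε, f w ∂μ) p μ ≤ eLpNorm f p μ := by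
  have := cond_isProbabilityMeasure_of_finite (measure_closedBall_pos μ (0 : E) hε).ne'
    measure_closedBall_lt_top.ne
  simp only [setAverage_closedBall_eq_integral_add]
  exact eLpNorm_integral_add_le hf hp

theorem stronglyMeasurable_setAverage_closedBall (hf : StronglyMeasurable f) (ε : ℝ) :
    StronglyMeasurable fun z => ⨍ w in closedBall z ε, f w ∂μ := by
  simp only [setAverage_closedBall_eq_integral_add]
  have h_uncurry : StronglyMeasurable (Function.uncurry fun z u : E => f (z + u)) :=
    hf.comp_measurable measurable_add
  exact h_uncurry.integral_prod_right

theorem eLpNorm_le_liminf_of_tendsto_setIntegral_closedBall [CompleteSpace F]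
    (hf : LocallyIntegrable f μ) {fn : ℕ → E → F} (hfn : ∀ n, StronglyMeasurable (fn n))
    (h_tendsto : ∀ z ε, Tendsto (fun n => ∫ w in closedBall z ε, fn n w ∂μ) atTop
      (nhds (∫ w in closedBall z ε, f w ∂μ))) (hp : 1 ≤ p) :
    eLpNorm f p μ ≤ liminf (fun n => eLpNorm (fn n) p μ) atTop := by
  let ε : ℕ → ℝ := fun k => 1 / ((k : ℝ) + 1)
  have hε : ∀ k, 0 < ε k := fun k => Nat.one_div_pos_of_nat
  have h_avg_tendsto : ∀ k z, Tendsto (fun n => ⨍ w in closedBall z (ε k), fn n w ∂μ) atTop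
      (nhds (⨍ w in closedBall z (ε k), f w ∂μ)) := fun k z => by
    simpa only [setAverage_eq] using (h_tendsto z (ε k)).const_smul _
  have h_avg_meas : ∀ k, StronglyMeasurable fun z => ⨍ w in closedBall z (ε k), f w ∂μ := fun k =>
    stronglyMeasurable_of_tendsto atTop
      (fun n => stronglyMeasurable_setAverage_closedBall (hfn n) (ε k))
      (tendsto_pi_nhds.2 (h_avg_tendsto k))
  have h_avg_le : ∀ k, eLpNorm (fun z => ⨍ w in closedBall z (ε k), f w ∂μ) p μ ≤
      liminf (fun n => eLpNorm (fn n) p μ) atTop := fun k =>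
    (Lp.eLpNorm_lim_le_liminf_eLpNorm
      (fun n => (stronglyMeasurable_setAverage_closedBall (hfn n) (ε k)).aestronglyMeasurable) _
      (.of_forall (h_avg_tendsto k))).trans
      (liminf_le_liminf (.of_forall fun n => eLpNorm_setAverage_closedBall_le (hfn n) hp (hε k)))
  have h_lebesgue : ∀ᵐ z ∂μ, Tendsto (fun k => ⨍ w in closedBall z (ε k), f w ∂μ) atTop
      (nhds (f z)) := by
    filter_upwards [IsUnifLocDoublingMeasure.ae_tendsto_average μ hf 1] with z hz
    refine hz (fun _ => z) ε ?_ (.of_forall fun k => mem_closedBall_self (by linarith [hε k]))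
    exact tendsto_nhdsWithin_iff.2 ⟨tendsto_one_div_add_atTop_nhds_zero_nat, .of_forall hε⟩
  calc eLpNorm f p μ
      ≤ liminf (fun k => eLpNorm (fun z => ⨍ w in closedBall z (ε k), f w ∂μ) p μ) atTop :=
        Lp.eLpNorm_lim_le_liminf_eLpNorm (fun k => (h_avg_meas k).aestronglyMeasurable) f h_lebesgue
    _ ≤ liminf (fun _ => liminf (fun n => eLpNorm (fn n) p μ) atTop) atTop :=
        liminf_le_liminf (.of_forall h_avg_le)
    _ = liminf (fun n => eLpNorm (fn n) p μ) atTop := liminf_const _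

end LocalAverage

/-! ### Kernels under the cut distance -/

section CutDistance

open Metric

theorem unif01_prod_unif01 :
    unif01.prod unif01 = (volume : Measure (ℝ × ℝ)).restrict (Icc 0 1 ×ˢ Icc 0 1) := by
  rw [unif01, Measure.prod_restrict, ← Measure.volume_eq_prod]

theorem integral_integral_Icc_inter {D : ℝ → ℝ → ℝ}
    (hD : Integrable (fun z : ℝ × ℝ => D z.1 z.2) (unif01.prod unif01)) {S T : Set ℝ}
    (hS : MeasurableSet S) (hT : MeasurableSet T) :
    ∫ x in Icc (0 : ℝ) 1 ∩ S, ∫ y in Icc (0 : ℝ) 1 ∩ T, D x y =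
      ∫ z in S ×ˢ T, D z.1 z.2 ∂(unif01.prod unif01) := by
  rw [unif01_prod_unif01] at hD ⊢
  rw [Measure.restrict_restrict (hS.prod hT), prod_inter_prod, inter_comm S, inter_comm T,
    Measure.volume_eq_prod, setIntegral_prod]
  exact IntegrableOn.mono_set hD (prod_mono inter_subset_left inter_subset_left)

variable {U W : ℝ → ℝ → ℝ}

theorem abs_setIntegral_prod_sub_le_cutDist
    (hU : Integrable (fun z : ℝ × ℝ => U z.1 z.2) (unif01.prod unif01))
    (hW : Integrable (fun z : ℝ × ℝ => W z.1 z.2) (unif01.prod unif01)) {S T : Set ℝ}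
    (hS : MeasurableSet S) (hT : MeasurableSet T) :
    |∫ z in S ×ˢ T, U z.1 z.2 ∂(unif01.prod unif01) -
      ∫ z in S ×ˢ T, W z.1 z.2 ∂(unif01.prod unif01)| ≤ cutDist U W := by
  have hUW : Integrable (fun z : ℝ × ℝ => U z.1 z.2 - W z.1 z.2) (unif01.prod unif01) := hU.sub hW
  have : Nonempty {T : Set ℝ // MeasurableSet T} := ⟨⟨∅, MeasurableSet.empty⟩⟩
  have h_bound : ∀ S' T' : {S : Set ℝ // MeasurableSet S},
      |∫ x in Icc (0 : ℝ) 1 ∩ S'.1, ∫ y in Icc (0 : ℝ) 1 ∩ T'.1, (U x y - W x y)| ≤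
        ∫ z, ‖U z.1 z.2 - W z.1 z.2‖ ∂(unif01.prod unif01) := fun S' T' => by
    rw [integral_integral_Icc_inter hUW S'.2 T'.2, ← Real.norm_eq_abs]
    exact (norm_integral_le_integral_norm _).trans
      (setIntegral_le_integral hUW.norm (.of_forall fun _ => norm_nonneg _))
  rw [← integral_sub hU.integrableOn hW.integrableOn,
    ← integral_integral_Icc_inter (D := fun x y => U x y - W x y) hUW hS hT]
  exact (le_ciSup (ι := {T : Set ℝ // MeasurableSet T})
      ⟨_, forall_mem_range.2 fun T' => h_bound ⟨S, hS⟩ T'⟩ ⟨T, hT⟩).trans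
    (le_ciSup (ι := {S : Set ℝ // MeasurableSet S})
      ⟨_, forall_mem_range.2 fun S' => ciSup_le fun T' => h_bound S' T'⟩ ⟨S, hS⟩)

theorem MPB.measurePreserving_prodMap {σ : ℝ → ℝ} (hσ : MPB σ) :
    MeasurePreserving (Prod.map σ σ) (unif01.prod unif01) (unif01.prod unif01) :=
  hσ.2.prod hσ.2

theorem exists_MPB_cutDist_lt {δ : ℝ} (hδ : 0 < δ) (U W : ℝ → ℝ → ℝ) :
    ∃ σ, MPB σ ∧ cutDist (fun x y => U (σ x) (σ y)) W < weakCutDist U W + δ := by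
  have : Nonempty {σ : ℝ → ℝ // MPB σ} := ⟨⟨id, bijOn_id _, MeasurePreserving.id _⟩⟩
  obtain ⟨σ, hσ⟩ := exists_lt_of_ciInf_lt (lt_add_of_pos_right (weakCutDist U W) hδ)
  exact ⟨σ.1, σ.2, hσ⟩

variable {Un : ℕ → ℝ → ℝ → ℝ} {r : ℝ≥0∞}

theorem kerNorm_le_liminf_of_tendsto_cutDist
    (hUn : ∀ n, Measurable (Function.uncurry (Un n))) (hUn_one : ∀ n, kerNorm (Un n) 1 ≠ ⊤)
    (hW : Measurable (Function.uncurry W)) (hW_one : kerNorm W 1 ≠ ⊤)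
    (hcut : Tendsto (fun n => cutDist (Un n) W) atTop (nhds 0)) (hr : 1 ≤ r) :
    kerNorm W r ≤ liminf (fun n => kerNorm (Un n) r) atTop := by
  have h_int : ∀ {V : ℝ → ℝ → ℝ}, Measurable (Function.uncurry V) → kerNorm V 1 ≠ ⊤ →
      Integrable (fun z : ℝ × ℝ => V z.1 z.2) (unif01.prod unif01) := fun hV hV_one =>
    memLp_one_iff_integrable.1 ⟨hV.aestronglyMeasurable, hV_one.lt_top⟩
  have h_sq : MeasurableSet (Icc (0 : ℝ) 1 ×ˢ Icc (0 : ℝ) 1) :=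
    measurableSet_Icc.prod measurableSet_Icc
  have h_norm : ∀ V : ℝ → ℝ → ℝ, kerNorm V r = eLpNorm
      ((Icc (0 : ℝ) 1 ×ˢ Icc (0 : ℝ) 1).indicator fun z => V z.1 z.2) r volume := fun V => by
    rw [kerNorm, unif01_prod_unif01, eLpNorm_indicator_eq_eLpNorm_restrict h_sq]
  simp only [h_norm]
  refine eLpNorm_le_liminf_of_tendsto_setIntegral_closedBall ?_
    (fun n => ((hUn n).indicator h_sq).stronglyMeasurable) (fun z ε => ?_) hr
  · refine (IntegrableOn.integrable_indicator ?_ h_sq).locallyIntegrable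
    rw [IntegrableOn, ← unif01_prod_unif01]
    exact h_int hW hW_one
  · have h_ball : ∀ V : ℝ → ℝ → ℝ, ∫ w in closedBall z ε,
        (Icc (0 : ℝ) 1 ×ˢ Icc (0 : ℝ) 1).indicator (fun z => V z.1 z.2) w =
          ∫ w in closedBall z.1 ε ×ˢ closedBall z.2 ε, V w.1 w.2 ∂(unif01.prod unif01) :=
      fun V => by
        rw [setIntegral_indicator h_sq, closedBall_prod_same, unif01_prod_unif01,
          Measure.restrict_restrict measurableSet_closedBall]
    simp only [h_ball]
    rw [tendsto_iff_norm_sub_tendsto_zero]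
    exact squeeze_zero (fun _ => norm_nonneg _)
      (fun n => abs_setIntegral_prod_sub_le_cutDist (h_int (hUn n) (hUn_one n))
        (h_int hW hW_one) measurableSet_closedBall measurableSet_closedBall) hcut

theorem kerNorm_comp_MPB {σ : ℝ → ℝ} (hσ : MPB σ) (hU : Measurable (Function.uncurry U)) :
    kerNorm (fun x y => U (σ x) (σ y)) r = kerNorm U r := by
  have hU' : Measurable fun z : ℝ × ℝ => U z.1 z.2 := hU
  rw [kerNorm, kerNorm, ← eLpNorm_comp_measurePreserving hU'.aestronglyMeasurable
    hσ.measurePreserving_prodMap]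
  simp only [Function.comp_def, Prod.map_fst, Prod.map_snd]

theorem kerNorm_le_liminf_of_tendsto_weakCutDist
    (hUn : ∀ n, Measurable (Function.uncurry (Un n))) (hUn_one : ∀ n, kerNorm (Un n) 1 ≠ ⊤)
    (hW : Measurable (Function.uncurry W)) (hW_one : kerNorm W 1 ≠ ⊤)
    (hcut : Tendsto (fun n => weakCutDist (Un n) W) atTop (nhds 0)) (hr : 1 ≤ r) :
    kerNorm W r ≤ liminf (fun n => kerNorm (Un n) r) atTop := by
  choose σ hσ hσ_lt using fun n : ℕ =>
    exists_MPB_cutDist_lt (Nat.one_div_pos_of_nat (α := ℝ) (n := n)) (Un n) W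
  have h_cut : Tendsto (fun n => cutDist (fun x y => Un n (σ n x) (σ n y)) W) atTop (nhds 0) :=
    squeeze_zero (fun n => Real.iSup_nonneg fun _ => Real.iSup_nonneg fun _ => abs_nonneg _)
      (fun n => (hσ_lt n).le) (by simpa using hcut.add tendsto_one_div_add_atTop_nhds_zero_nat)
  simpa only [kerNorm_comp_MPB (hσ _) (hUn _)] using kerNorm_le_liminf_of_tendsto_cutDist
    (Un := fun n x y => Un n (σ n x) (σ n y)) (r := r)
    (fun n => (hUn n).comp (hσ n).measurePreserving_prodMap.measurable)
    (fun n => (kerNorm_comp_MPB (hσ n) (hUn n)).trans_ne (hUn_one n)) hW hW_one h_cut hr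

theorem measurable_stepKernel (n : ℕ) (Q : Fin n → Fin n → ℝ) :
    Measurable (Function.uncurry (stepKernel n Q)) := by
  unfold Function.uncurry stepKernel
  exact Finset.measurable_sum _ fun _ _ => Finset.measurable_sum _ fun _ _ =>
    Measurable.ite ((measurable_fst measurableSet_Ioc).inter (measurable_snd measurableSet_Ioc))
      measurable_const measurable_const

theorem norm_stepKernel_le (n : ℕ) (Q : Fin n → Fin n → ℝ) (x y : ℝ) :
    ‖stepKernel n Q x y‖ ≤ ∑ i, ∑ j, ‖Q i j‖ :=
  norm_sum_le_of_le _ fun _ _ => norm_sum_le_of_le _ fun _ _ => by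
    split_ifs <;> simp

theorem kerNorm_stepKernel_ne_top (n : ℕ) (Q : Fin n → Fin n → ℝ) (r : ℝ≥0∞) :
    kerNorm (stepKernel n Q) r ≠ ⊤ :=
  (MemLp.of_bound (measurable_stepKernel n Q).aestronglyMeasurable _
    (.of_forall fun z => norm_stepKernel_le n Q z.1 z.2)).2.ne

theorem kerNorm_ne_top_of_tendsto_weakCutDist_stepKernel {Q : ∀ n : ℕ, Fin n → Fin n → ℝ}
    (hW : Measurable (Function.uncurry W)) (hW_one : kerNorm W 1 ≠ ⊤)
    (hcut : Tendsto (fun n => weakCutDist (stepKernel n (Q n)) W) atTop (nhds 0)) (hr : 1 ≤ r)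
    (hQ : limsup (fun n => kerNorm (stepKernel n (Q n)) r) atTop ≠ ⊤) :
    kerNorm W r ≠ ⊤ :=
  ne_top_of_le_ne_top hQ <|
    (kerNorm_le_liminf_of_tendsto_weakCutDist (fun n => measurable_stepKernel n (Q n))
      (fun n => kerNorm_stepKernel_ne_top n (Q n) 1) hW hW_one hcut hr).trans liminf_le_limsup

theorem kerNorm_mul_natCast_ne_top_of_tendsto_weakCutDist_stepKernel
    {Q : ∀ n : ℕ, Fin n → Fin n → ℝ} (hW : Measurable (Function.uncurry W))
    (hW_one : kerNorm W 1 ≠ ⊤)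
    (hcut : Tendsto (fun n => weakCutDist (stepKernel n (Q n)) W) atTop (nhds 0)) {q : ℝ≥0∞}
    (hq : 1 ≤ q) (d : ℕ)
    (hQ : limsup (fun n => kerNorm (stepKernel n (Q n)) (q * d)) atTop ≠ ⊤) :
    kerNorm W (q * d) ≠ ⊤ := by
  rcases Nat.eq_zero_or_pos d with rfl | hd
  · simp [kerNorm]
  · exact kerNorm_ne_top_of_tendsto_weakCutDist_stepKernel hW hW_one hcut
      (one_le_mul hq (Nat.one_le_cast.2 hd)) hQ

end CutDistance

/-! ### The variational problem -/

section Variational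

variable {X : Type*} [MeasurableSpace X]

/-- The constraint set of the variational problem for `Z(θ)`: the `ν ∈ 𝒯ℳ` with
`D(ν|ρ) < ∞`, where `ρ = Unif[0,1] ⊗ μ`. -/
def finiteEntropyTM (μ : Measure X) : Set (Measure (ℝ × X)) :=
  {ν | inTM ν ∧ KLdiv ν (unif01.prod μ) ≠ ⊤}

variable {v : ℕ} (G : SimpleGraph (Fin v)) [DecidableRel G.Adj] (W : ℝ → ℝ → ℝ)
  (φ : (Fin v → X) → ℝ) (μ : Measure X)

theorem Zset_eq_image (θ : ℝ) :
    Zset G W φ μ θ = (fun ν => θ * TWphi G W φ ν - (KLdiv ν (unif01.prod μ)).toReal) ''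
      finiteEntropyTM μ := by
  simp only [Zset, finiteEntropyTM, image, and_assoc, eq_comm, mem_ofPred_eq]

theorem Zfun_eq_sSup_image :
    Zfun G W φ μ = fun θ => sSup
      ((fun ν => θ * TWphi G W φ ν - (KLdiv ν (unif01.prod μ)).toReal) '' finiteEntropyTM μ) :=
  funext fun θ => by rw [Zfun, Zset_eq_image]

theorem Fset_eq_sep_isMaxOn (θ : ℝ) :
    Fset G W φ μ θ = {ν ∈ finiteEntropyTM μ | IsMaxOn
      (fun σ => θ * TWphi G W φ σ - (KLdiv σ (unif01.prod μ)).toReal) (finiteEntropyTM μ) ν} := by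
  ext ν
  simp only [Fset, finiteEntropyTM, isMaxOn_iff, mem_ofPred_eq, and_assoc, and_imp]

theorem setOf_forall_KLdiv_le_eq_sep_isMinOn (t : ℝ) :
    {ν : Measure (ℝ × X) | inTM ν ∧ KLdiv ν (unif01.prod μ) ≠ ⊤ ∧ TWphi G W φ ν = t ∧
        ∀ σ : Measure (ℝ × X), inTM σ → KLdiv σ (unif01.prod μ) ≠ ⊤ →
          TWphi G W φ σ = t → KLdiv ν (unif01.prod μ) ≤ KLdiv σ (unif01.prod μ)} =
      {ν ∈ {ν ∈ finiteEntropyTM μ | TWphi G W φ ν = t} |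
        IsMinOn (fun σ => (KLdiv σ (unif01.prod μ)).toReal)
          {ν ∈ finiteEntropyTM μ | TWphi G W φ ν = t} ν} := by
  ext ν
  simp only [finiteEntropyTM, isMinOn_iff, mem_ofPred_eq, and_assoc, and_imp]
  refine and_congr_right fun _ => and_congr_right fun hν => and_congr_right fun _ =>
    forall₃_congr fun σ _ hσ => imp_congr_right fun _ => ?_
  rw [ENNReal.toReal_le_toReal hν hσ]

end Variational

theorem constrained_minimizers_eq_Fset_general {X : Type*} [MeasurableSpace X]
    (μ : Measure X) [IsProbabilityMeasure μ] {v : ℕ} (G : SimpleGraph (Fin v))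
    [DecidableRel G.Adj] (φ : (Fin v → X) → ℝ) (_hφ : Measurable φ) (W : ℝ → ℝ → ℝ)
    (hW : Measurable (Function.uncurry W)) (ψ : X → ℝ) (hψ : Measurable ψ)
    (hψ_nonneg : ∀ x, 0 ≤ ψ x) (p : ℝ≥0∞) (hvp : v ≤ p) (hTail : TailCond μ ψ p)
    (hdom : ∀ y : Fin v → X, |φ y| ≤ ∏ a, ψ (y a)) (q : ℝ≥0∞) (hpq : p⁻¹ + q⁻¹ ≤ 1)
    (hWq : kerNorm W (q * G.maxDegree) ≠ ⊤) (θ : ℝ) (hne : (Fset G W φ μ θ).Nonempty)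
    (hdiff : DifferentiableAt ℝ (Zfun G W φ μ) θ) :
    {ν : Measure (ℝ × X) | inTM ν ∧ KLdiv ν (unif01.prod μ) ≠ ⊤ ∧
        TWphi G W φ ν = deriv (Zfun G W φ μ) θ ∧
        ∀ σ : Measure (ℝ × X), inTM σ → KLdiv σ (unif01.prod μ) ≠ ⊤ →
          TWphi G W φ σ = deriv (Zfun G W φ μ) θ →
            KLdiv ν (unif01.prod μ) ≤ KLdiv σ (unif01.prod μ)} =
      Fset G W φ μ θ := by
  have hbdd := bddAbove_Zset μ hW hψ hψ_nonneg hdom hvp hTail hpq hWq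
  simp only [Zset_eq_image] at hbdd
  rw [Fset_eq_sep_isMaxOn] at hne ⊢
  rw [setOf_forall_KLdiv_le_eq_sep_isMinOn]
  rw [Zfun_eq_sSup_image] at hdiff ⊢
  exact sep_isMinOn_level_eq_sep_isMaxOn
    (fun ν hν hmax => eq_deriv_sSup_of_isMaxOn hν hmax hbdd hdiff) hne

/-- Lemma 1.1 (ii): constrained minimizers coincide with `F_θ`. -/
theorem constrained_minimizers_eq_Fset
    {X : Type*} [MeasurableSpace X] [TopologicalSpace X] [PolishSpace X] [BorelSpace X]
    (μ : Measure X) [IsProbabilityMeasure μ]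
    (hnondeg : ∀ x : X, μ ≠ Measure.dirac x)
    {v : ℕ} (hv : 2 ≤ v) (G : SimpleGraph (Fin v)) [DecidableRel G.Adj]
    (φ : (Fin v → X) → ℝ) (hφ : Measurable φ)
    (Q : ∀ n : ℕ, Fin n → Fin n → ℝ)
    (hQsymm : ∀ n i j, Q n i j = Q n j i) (hQzero : ∀ n i, Q n i i = 0)
    (W : ℝ → ℝ → ℝ) (hWmeas : Measurable (Function.uncurry W))
    (hWsymm : ∀ x y, W x y = W y x) (hWL1 : kerNorm W 1 ≠ ⊤)
    (hcut : Tendsto (fun n => weakCutDist (stepKernel n (Q n)) W) atTop (nhds 0))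
    (ψ : X → ℝ) (hψmeas : Measurable ψ) (hψpos : ∀ x, 0 ≤ ψ x)
    (p : ℝ≥0∞) (hpv : (v : ℝ≥0∞) ≤ p) (hTail : TailCond μ ψ p)
    (hdom : ∀ y : Fin v → X, |φ y| ≤ ∏ a, ψ (y a))
    (q : ℝ≥0∞) (hq : 1 < q) (hpq : p⁻¹ + q⁻¹ ≤ 1)
    (hnorm : Filter.atTop.limsup
        (fun n => kerNorm (stepKernel n (Q n)) (q * (G.maxDegree : ℝ≥0∞))) ≠ ⊤)
    (θ t₀ t : ℝ)
    (hsingle : {s : ℝ | ∃ ν ∈ Fset G W φ μ θ, TWphi G W φ ν = s} = {t₀})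
    (hdiff : DifferentiableAt ℝ (Zfun G W φ μ) θ)
    (ht : t = deriv (Zfun G W φ μ) θ) :
    {ν : Measure (ℝ × X) | inTM ν ∧ KLdiv ν (unif01.prod μ) ≠ ⊤ ∧
        TWphi G W φ ν = t ∧
        ∀ σ : Measure (ℝ × X), inTM σ → KLdiv σ (unif01.prod μ) ≠ ⊤ →
          TWphi G W φ σ = t → KLdiv ν (unif01.prod μ) ≤ KLdiv σ (unif01.prod μ)} =
      Fset G W φ μ θ := by
  subst ht
  have hWq := kerNorm_mul_natCast_ne_top_of_tendsto_weakCutDist_stepKernel hWmeas hWL1 hcut hq.le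
    G.maxDegree hnorm
  obtain ⟨ν, hν, -⟩ := hsingle.superset (mem_singleton t₀)
  exact constrained_minimizers_eq_Fset_general μ G φ hφ W hWmeas ψ hψmeas hψpos p hpv hTail hdom
    q hpq hWq θ ⟨ν, hν⟩ hdiff
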